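/- Let σ ≥ 2 and let ℋ be the linearized NLS operator of the context. Then the edges ±1 of the essential spectrum are neither eigenvalues nor resonances: every bounded, twice continuously differentiable f : ℝ → ℂ² satisfying ℋf = f or ℋf = −f vanishes identically. -/

import Mathlib

noncomputable section

open Real MeasureTheory

/-- `φ^(2σ)(x) = (σ+1)·cosh(σx)^(−2)` where `φ` is the NLS ground state. -/
def phiPow (σ x : ℝ) : ℝ := (σ + 1) / Real.cosh (σ * x) ^ 2

/-- The linearized NLS operator `ℋ` about the standing wave `e^{it}φ`:
`ℋf = (−f₁'' + f₁ − (σ+1)φ^{2σ}f₁ − σφ^{2σ}f₂, f₂'' − f₂ + (σ+1)φ^{2σ}f₂ + σφ^{2σ}f₁)`. -/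
def linH (σ : ℝ) (f : ℝ → ℂ × ℂ) (x : ℝ) : ℂ × ℂ :=
  (-(iteratedDeriv 2 (fun y => (f y).1) x) + (f x).1
      - (((σ + 1) * phiPow σ x : ℝ) : ℂ) * (f x).1 - ((σ * phiPow σ x : ℝ) : ℂ) * (f x).2,
    iteratedDeriv 2 (fun y => (f y).2) x - (f x).2
      + (((σ + 1) * phiPow σ x : ℝ) : ℂ) * (f x).2 + ((σ * phiPow σ x : ℝ) : ℂ) * (f x).1)

open Filter Topology Set

/-- growth direction, one-sided -/
lemma as_unst (k : ℝ) (hk : 0 < k) (r e : ℝ → ℝ) (hr : ∀ x, HasDerivAt r (k * r x + e x) x)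
    (B : ℝ) (hB : ∀ x, |r x| ≤ B) (he : Tendsto e atTop (𝓝 0)) (δ : ℝ) (hδ : 0 < δ) :
    ∀ᶠ x in atTop, -δ ≤ r x := by
  have h1 : ∀ᶠ x in atTop, e x < k * δ := he.eventually (gt_mem_nhds (by positivity))
  obtain ⟨X, hX⟩ := eventually_atTop.1 h1
  filter_upwards [eventually_ge_atTop X] with x hx
  have hd : ∀ y, HasDerivAt (fun y => Real.exp (-k * y) * (r y + δ))
      (Real.exp (-k * y) * (e y - k * δ)) y := by
    intro y
    have h2 : HasDerivAt (fun y => Real.exp (-k * y)) (Real.exp (-k * y) * (-k * 1)) y :=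
      ((hasDerivAt_id y).const_mul (-k)).exp
    refine (h2.mul ((hr y).add_const δ)).congr_deriv ?_
    ring
  have hanti : AntitoneOn (fun y => Real.exp (-k * y) * (r y + δ)) (Ici X) := by
    apply antitoneOn_of_hasDerivWithinAt_nonpos (convex_Ici X)
      (fun y _ => (hd y).continuousAt.continuousWithinAt)
      (fun y _ => (hd y).hasDerivWithinAt)
    intro y hy
    rw [interior_Ici] at hy
    have := hX y (le_of_lt hy)
    have h3 := Real.exp_pos (-k * y)
    nlinarith
  have ht : Tendsto (fun y => Real.exp (-k * y) * (r y + δ)) atTop (𝓝 0) := by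
    have h4 : Tendsto (fun y : ℝ => Real.exp (-k * y)) atTop (𝓝 0) := by
      apply Real.tendsto_exp_atBot.comp
      exact tendsto_id.const_mul_atTop_of_neg (by linarith)
    apply h4.zero_mul_isBoundedUnder_le
    refine isBoundedUnder_of ⟨B + δ, fun y => ?_⟩
    simp only [Function.comp, Real.norm_eq_abs]
    calc |r y + δ| ≤ |r y| + |δ| := abs_add_le _ _
      _ ≤ B + δ := by rw [abs_of_pos hδ]; linarith [hB y]
  have h5 : 0 ≤ Real.exp (-k * x) * (r x + δ) := by
    apply le_of_tendsto ht
    filter_upwards [eventually_ge_atTop x] with y hy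
    exact hanti hx (le_trans hx hy) hy
  have h6 := nonneg_of_mul_nonneg_right h5 (Real.exp_pos _)
  linarith

lemma as_two_sided (r : ℝ → ℝ) (h1 : ∀ δ > 0, ∀ᶠ x in atTop, -δ ≤ r x)
    (h2 : ∀ δ > 0, ∀ᶠ x in atTop, -δ ≤ -r x) : Tendsto r atTop (𝓝 0) := by
  rw [Metric.tendsto_nhds]
  intro ε hε
  filter_upwards [h1 (ε/2) (by positivity), h2 (ε/2) (by positivity)] with x ha hb
  rw [Real.dist_eq, abs_lt]; constructor <;> linarith

lemma as_unst' (k : ℝ) (hk : 0 < k) (r e : ℝ → ℝ) (hr : ∀ x, HasDerivAt r (k * r x + e x) x)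
    (B : ℝ) (hB : ∀ x, |r x| ≤ B) (he : Tendsto e atTop (𝓝 0)) : Tendsto r atTop (𝓝 0) := by
  apply as_two_sided
  · intro δ hδ
    exact as_unst k hk r e hr B hB he δ hδ
  · intro δ hδ
    refine as_unst k hk (fun x => - r x) (fun x => - e x) (fun x => ?_) B (fun x => ?_) ?_ δ hδ
    · exact (hr x).neg.congr_deriv (by ring)
    · rw [abs_neg]; exact hB x
    · simpa using he.neg

lemma as_st (k : ℝ) (hk : 0 < k) (r e : ℝ → ℝ) (hr : ∀ x, HasDerivAt r (-k * r x + e x) x)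
    (he : Tendsto e atTop (𝓝 0)) (δ : ℝ) (hδ : 0 < δ) :
    ∀ᶠ x in atTop, -δ ≤ - r x := by
  have h1 : ∀ᶠ x in atTop, e x < k * (δ / 2) := he.eventually (gt_mem_nhds (by positivity))
  obtain ⟨X, hX⟩ := eventually_atTop.1 h1
  have hd : ∀ y, HasDerivAt (fun y => Real.exp (k * y) * (r y - δ / 2))
      (Real.exp (k * y) * (e y - k * (δ / 2))) y := by
    intro y
    have h2 : HasDerivAt (fun y => Real.exp (k * y)) (Real.exp (k * y) * (k * 1)) y :=
      ((hasDerivAt_id y).const_mul k).exp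
    refine (h2.mul ((hr y).sub_const (δ / 2))).congr_deriv ?_
    ring
  have hanti : AntitoneOn (fun y => Real.exp (k * y) * (r y - δ / 2)) (Ici X) := by
    apply antitoneOn_of_hasDerivWithinAt_nonpos (convex_Ici X)
      (fun y _ => (hd y).continuousAt.continuousWithinAt)
      (fun y _ => (hd y).hasDerivWithinAt)
    intro y hy
    rw [interior_Ici] at hy
    have := hX y (le_of_lt hy)
    have h3 := Real.exp_pos (k * y)
    nlinarith
  have h4 : Tendsto (fun y : ℝ => Real.exp (-k * y) * (Real.exp (k * X) * (r X - δ / 2)))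
      atTop (𝓝 0) := by
    rw [← zero_mul (Real.exp (k * X) * (r X - δ / 2))]
    apply Tendsto.mul_const
    apply Real.tendsto_exp_atBot.comp
    exact tendsto_id.const_mul_atTop_of_neg (by linarith)
  have h5 := h4.eventually (gt_mem_nhds (show (0:ℝ) < δ / 2 by positivity))
  filter_upwards [h5, eventually_ge_atTop X] with x h6 hx
  have h7 : Real.exp (k * x) * (r x - δ / 2) ≤ Real.exp (k * X) * (r X - δ / 2) :=
    hanti (mem_Ici.2 le_rfl) hx hx
  have h8 : Real.exp (-k * x) * (Real.exp (k * x) * (r x - δ / 2)) = r x - δ / 2 := by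
    rw [← mul_assoc, ← Real.exp_add]; simp
  have h9 := mul_le_mul_of_nonneg_left h7 (Real.exp_pos (-k * x)).le
  rw [h8] at h9
  linarith

lemma as_st' (k : ℝ) (hk : 0 < k) (r e : ℝ → ℝ) (hr : ∀ x, HasDerivAt r (-k * r x + e x) x)
    (he : Tendsto e atTop (𝓝 0)) : Tendsto r atTop (𝓝 0) := by
  apply as_two_sided
  · intro δ hδ
    have := as_st k hk (fun x => - r x) (fun x => - e x) (fun x => ?_) ?_ δ hδ
    · simpa using this
    · exact (hr x).neg.congr_deriv (by ring)
    · simpa using he.neg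
  · intro δ hδ
    exact as_st k hk r e hr he δ hδ

/-- Landau type inequality -/
lemma landau (f f1 f2 : ℝ → ℝ) (h1 : ∀ x, HasDerivAt f (f1 x) x) (h2 : ∀ x, HasDerivAt f1 (f2 x) x)
    (B : ℝ) (hB : ∀ x, |f x| ≤ B) (x h M : ℝ) (hh : 0 < h) (hM : ∀ y, x ≤ y → |f2 y| ≤ M) :
    |f1 x| ≤ 2 * B / h + M * h := by
  obtain ⟨c, hc, hc2⟩ := exists_hasDerivAt_eq_slope f f1 (show x < x + h by linarith)
    (fun y _ => (h1 y).continuousAt.continuousWithinAt) (fun y _ => h1 y)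
  obtain ⟨d, hd, hd2⟩ := exists_hasDerivAt_eq_slope f1 f2 hc.1
    (fun y _ => (h2 y).continuousAt.continuousWithinAt) (fun y _ => h2 y)
  have hcx : 0 < c - x := by linarith [hc.1]
  have e1 : f1 c - f1 x = f2 d * (c - x) := by rw [hd2]; field_simp
  have e2 : |f1 c| ≤ 2 * B / h := by
    rw [hc2, show x + h - x = h by ring, abs_div, abs_of_pos hh]
    gcongr
    calc |f (x+h) - f x| ≤ |f (x+h)| + |f x| := abs_sub _ _
      _ ≤ 2 * B := by linarith [hB x, hB (x+h)]
  have e3 : |f2 d * (c - x)| ≤ M * h := by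
    rw [abs_mul, abs_of_pos hcx]
    have := hM d hd.1.le
    have h0 := abs_nonneg (f2 d)
    have : c - x ≤ h := by linarith [hc.2]
    gcongr
    linarith
  calc |f1 x| = |f1 c - f2 d * (c - x)| := by rw [← e1]; congr 1; ring
    _ ≤ |f1 c| + |f2 d * (c - x)| := abs_sub _ _
    _ ≤ _ := by linarith

lemma landau_bdd (f f1 f2 : ℝ → ℝ) (h1 : ∀ x, HasDerivAt f (f1 x) x)
    (h2 : ∀ x, HasDerivAt f1 (f2 x) x)
    (B : ℝ) (hB : ∀ x, |f x| ≤ B) (M : ℝ) (hM : ∀ y, |f2 y| ≤ M) (x : ℝ) :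
    |f1 x| ≤ 2 * B + M := by
  have := landau f f1 f2 h1 h2 B hB x 1 M one_pos (fun y _ => hM y)
  simpa using this

lemma landau_lim (f f1 f2 : ℝ → ℝ) (h1 : ∀ x, HasDerivAt f (f1 x) x)
    (h2 : ∀ x, HasDerivAt f1 (f2 x) x)
    (B : ℝ) (hB : ∀ x, |f x| ≤ B) (hl : Tendsto f2 atTop (𝓝 0)) : Tendsto f1 atTop (𝓝 0) := by
  have hB0 : 0 ≤ B := le_trans (abs_nonneg _) (hB 0)
  rw [Metric.tendsto_nhds]
  intro ε hε
  set h := 8 * (B + 1) / ε with hh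
  have hpos : 0 < h := by positivity
  have h3 : ∀ᶠ x in atTop, |f2 x| < ε / 4 / h := by
    have := (Metric.tendsto_nhds.1 hl) (ε / 4 / h) (by positivity)
    simpa [Real.dist_eq] using this
  obtain ⟨X, hX⟩ := eventually_atTop.1 h3
  filter_upwards [eventually_ge_atTop X] with x hx
  rw [Real.dist_eq, sub_zero]
  have h4 := landau f f1 f2 h1 h2 B hB x h (ε / 4 / h) hpos (fun y hy => (hX y (hx.trans hy)).le)
  have h5 : ε / 4 / h * h = ε / 4 := by field_simp
  have h6 : 2 * B / h ≤ ε / 4 := by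
    rw [div_le_iff₀ hpos, hh]
    field_simp
    linarith
  linarith

/-- decay at both ends -/
def Dec (f : ℝ → ℝ) : Prop := Tendsto f (cocompact ℝ) (𝓝 0)

def Bd (f : ℝ → ℝ) : Prop := ∃ B, ∀ x, |f x| ≤ B

lemma dec_iff (f : ℝ → ℝ) :
    Dec f ↔ Tendsto f atTop (𝓝 0) ∧ Tendsto (fun x => f (-x)) atTop (𝓝 0) := by
  unfold Dec
  rw [cocompact_eq_atBot_atTop, tendsto_sup, and_comm]
  refine and_congr_right fun _ => ⟨fun h => h.comp tendsto_neg_atTop_atBot, fun h => ?_⟩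
  have := h.comp tendsto_neg_atBot_atTop
  simpa [Function.comp_def] using this

lemma Bd.mul {f g : ℝ → ℝ} (hf : Bd f) (hg : Bd g) : Bd (fun x => f x * g x) := by
  obtain ⟨B, hB⟩ := hf
  obtain ⟨C, hC⟩ := hg
  refine ⟨B * C, fun x => ?_⟩
  rw [abs_mul]
  have := hB x
  have := hC x
  have := abs_nonneg (f x)
  gcongr
  linarith

lemma Bd.add {f g : ℝ → ℝ} (hf : Bd f) (hg : Bd g) : Bd (fun x => f x + g x) := by
  obtain ⟨B, hB⟩ := hf
  obtain ⟨C, hC⟩ := hg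
  exact ⟨B + C, fun x => (abs_add_le _ _).trans (add_le_add (hB x) (hC x))⟩

lemma Bd.sub {f g : ℝ → ℝ} (hf : Bd f) (hg : Bd g) : Bd (fun x => f x - g x) := by
  obtain ⟨B, hB⟩ := hf
  obtain ⟨C, hC⟩ := hg
  exact ⟨B + C, fun x => (abs_sub _ _).trans (add_le_add (hB x) (hC x))⟩

lemma Bd.const (c : ℝ) : Bd (fun _ => c) := ⟨|c|, fun _ => le_rfl⟩

lemma Bd.cmul {f : ℝ → ℝ} (c : ℝ) (hf : Bd f) : Bd (fun x => c * f x) := (Bd.const c).mul hf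

lemma Dec.add {f g : ℝ → ℝ} (hf : Dec f) (hg : Dec g) : Dec (fun x => f x + g x) := by
  simpa [Dec] using Tendsto.add hf hg

lemma Dec.sub {f g : ℝ → ℝ} (hf : Dec f) (hg : Dec g) : Dec (fun x => f x - g x) := by
  simpa [Dec] using Tendsto.sub hf hg

lemma Dec.mul_bd {f g : ℝ → ℝ} (hf : Dec f) (hg : Bd g) : Dec (fun x => f x * g x) := by
  obtain ⟨C, hC⟩ := hg
  exact Tendsto.zero_mul_isBoundedUnder_le hf (isBoundedUnder_of ⟨C, fun y => hC y⟩)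

lemma Dec.bd_mul {f g : ℝ → ℝ} (hf : Bd f) (hg : Dec g) : Dec (fun x => f x * g x) := by
  simpa [mul_comm] using hg.mul_bd hf

lemma Dec.cmul {f : ℝ → ℝ} (c : ℝ) (hf : Dec f) : Dec (fun x => c * f x) :=
  Dec.bd_mul (Bd.const c) hf

lemma hasDerivAt_refl {f : ℝ → ℝ} {f' x : ℝ} (h : HasDerivAt f f' (-x)) :
    HasDerivAt (fun y => f (-y)) (-f') x := by
  have := HasDerivAt.comp x h (hasDerivAt_neg x)
  exact this.congr_deriv (by ring)

lemma dec_landau (f f1 f2 : ℝ → ℝ) (h1 : ∀ x, HasDerivAt f (f1 x) x)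
    (h2 : ∀ x, HasDerivAt f1 (f2 x) x) (hB : Bd f) (hl : Dec f2) : Dec f1 := by
  obtain ⟨B, hB⟩ := hB
  rw [dec_iff] at hl ⊢
  refine ⟨landau_lim f f1 f2 h1 h2 B hB hl.1, ?_⟩
  have := landau_lim (fun x => f (-x)) (fun x => - f1 (-x)) (fun x => f2 (-x))
    (fun x => hasDerivAt_refl (h1 (-x)))
    (fun x => (hasDerivAt_refl (h2 (-x))).neg.congr_deriv (by ring)) B (fun x => hB (-x)) hl.2
  simpa using this.neg

lemma top_osc (q q1 e : ℝ → ℝ) (h1 : ∀ x, HasDerivAt q (q1 x) x)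
    (h2 : ∀ x, HasDerivAt q1 (2 * q x + e x) x) (hB : Bd q) (hB1 : Bd q1)
    (he : Tendsto e atTop (𝓝 0)) : Tendsto q1 atTop (𝓝 0) := by
  have hk : 0 < √2 := by positivity
  have hs : √2 * √2 = 2 := Real.mul_self_sqrt (by norm_num)
  have ha : Tendsto (fun x => q1 x + √2 * q x) atTop (𝓝 0) := by
    obtain ⟨B, hB⟩ := hB1.add (hB.cmul √2)
    refine as_unst' √2 hk _ e (fun x => ?_) B hB he
    refine ((h2 x).add ((h1 x).const_mul √2)).congr_deriv ?_
    linear_combination (-q x) * hs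
  have hb : Tendsto (fun x => q1 x - √2 * q x) atTop (𝓝 0) := by
    refine as_st' √2 hk _ e (fun x => ?_) he
    refine ((h2 x).sub ((h1 x).const_mul √2)).congr_deriv ?_
    linear_combination (-q x) * hs
  have := (ha.add hb).const_mul (1/2)
  simp only [add_zero, mul_zero] at this
  refine this.congr fun x => ?_
  ring

lemma dec_osc (q q1 e : ℝ → ℝ) (h1 : ∀ x, HasDerivAt q (q1 x) x)
    (h2 : ∀ x, HasDerivAt q1 (2 * q x + e x) x) (hB : Bd q) (he : Dec e) (hbe : Bd e) :
    Dec q1 := by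
  have hB1 : Bd q1 := by
    obtain ⟨M, hM⟩ := (hB.cmul 2).add hbe
    obtain ⟨B, hB'⟩ := hB
    exact ⟨_, landau_bdd q q1 _ h1 h2 B hB' M hM⟩
  rw [dec_iff] at he ⊢
  refine ⟨top_osc q q1 e h1 h2 hB hB1 he.1, ?_⟩
  have := top_osc (fun x => q (-x)) (fun x => - q1 (-x)) (fun x => e (-x))
    (fun x => hasDerivAt_refl (h1 (-x)))
    (fun x => (hasDerivAt_refl (h2 (-x))).neg.congr_deriv (by ring))
    (by obtain ⟨B, hB⟩ := hB; exact ⟨B, fun x => hB (-x)⟩)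
    (by obtain ⟨B, hB⟩ := hB1; exact ⟨B, fun x => by simpa using hB (-x)⟩) he.2
  simpa using this.neg


/-- `tanh (σ x)` -/
def tt (σ x : ℝ) : ℝ := Real.sinh (σ * x) / Real.cosh (σ * x)

/-- `log cosh (σ x) / σ`, a primitive of `tt` -/
def ell (σ x : ℝ) : ℝ := Real.log (Real.cosh (σ * x)) / σ

/-- `cosh (σ x) ^ (-m/σ)` -/
def EE (σ m x : ℝ) : ℝ := Real.exp (-m * ell σ x)

lemma tt_sq (σ x : ℝ) : 1 - tt σ x ^ 2 = 1 / Real.cosh (σ * x) ^ 2 := by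
  have h := Real.cosh_pos (σ * x)
  have := Real.cosh_sq (σ * x)
  unfold tt
  field_simp
  linarith

lemma phiPow_eq (σ x : ℝ) : phiPow σ x = (σ + 1) * (1 - tt σ x ^ 2) := by
  rw [tt_sq, phiPow]; ring

lemma ss_pos (σ x : ℝ) : 0 < 1 - tt σ x ^ 2 := by
  rw [tt_sq]
  have h := Real.cosh_pos (σ * x)
  positivity

lemma tt_deriv (σ x : ℝ) : HasDerivAt (tt σ) (σ * (1 - tt σ x ^ 2)) x := by
  have h := Real.cosh_pos (σ * x)
  have h0 : HasDerivAt (fun x => σ * x) (σ * 1) x := (hasDerivAt_id x).const_mul σ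
  have := h0.sinh.div h0.cosh h.ne'
  refine this.congr_deriv ?_
  unfold tt
  field_simp

lemma tt_neg (σ x : ℝ) : tt σ (-x) = - tt σ x := by
  unfold tt
  rw [mul_neg, Real.sinh_neg, Real.cosh_neg, neg_div]

lemma tt_bd (σ : ℝ) : Bd (tt σ) := by
  refine ⟨1, fun x => ?_⟩
  have := ss_pos σ x
  rw [abs_le_one_iff_mul_self_le_one]
  nlinarith

lemma ell_deriv (σ : ℝ) (hσ : 0 < σ) (x : ℝ) : HasDerivAt (ell σ) (tt σ x) x := by
  have h := Real.cosh_pos (σ * x)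
  have h0 : HasDerivAt (fun x => σ * x) (σ * 1) x := (hasDerivAt_id x).const_mul σ
  have := (h0.cosh.log h.ne').div_const σ
  refine this.congr_deriv ?_
  unfold tt
  field_simp

lemma EE_deriv (σ : ℝ) (hσ : 0 < σ) (m x : ℝ) :
    HasDerivAt (EE σ m) (-m * tt σ x * EE σ m x) x := by
  have := ((ell_deriv σ hσ x).const_mul (-m)).exp
  refine this.congr_deriv ?_
  unfold EE
  ring

lemma EE_pos (σ m x : ℝ) : 0 < EE σ m x := Real.exp_pos _

lemma EE_cont (σ : ℝ) (hσ : 0 < σ) (m : ℝ) : Continuous (EE σ m) :=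
  continuous_iff_continuousAt.2 fun x => (EE_deriv σ hσ m x).continuousAt

lemma ell_le (σ : ℝ) (hσ : 0 < σ) (x : ℝ) : ell σ x ≤ |x| := by
  unfold ell
  rw [div_le_iff₀ hσ, ← Real.log_exp (|x| * σ)]
  apply Real.log_le_log (Real.cosh_pos _)
  rw [← Real.cosh_abs, Real.cosh_eq, abs_mul, abs_of_pos hσ]
  have h1 : Real.exp (-(σ * |x|)) ≤ Real.exp (σ * |x|) := by
    apply Real.exp_le_exp.2
    have : 0 ≤ σ * |x| := by positivity
    linarith
  rw [mul_comm |x| σ]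
  linarith

lemma le_ell (σ : ℝ) (hσ : 0 < σ) (x : ℝ) : |x| - Real.log 2 / σ ≤ ell σ x := by
  unfold ell
  rw [le_div_iff₀ hσ]
  have : (|x| - Real.log 2 / σ) * σ = Real.log (Real.exp (|x| * σ) / 2) := by
    rw [Real.log_div (Real.exp_pos _).ne' (by norm_num), Real.log_exp]
    field_simp
  rw [this]
  apply Real.log_le_log (by positivity)
  rw [← Real.cosh_abs, Real.cosh_eq, abs_mul, abs_of_pos hσ]
  have h1 := Real.exp_pos (-(σ * |x|))
  rw [mul_comm |x| σ]
  linarith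

lemma EE_le (σ : ℝ) (hσ : 0 < σ) (m : ℝ) (hm : 0 < m) :
    ∃ C, 0 < C ∧ ∀ x, EE σ m x ≤ C * Real.exp (-m * |x|) := by
  refine ⟨Real.exp (m * (Real.log 2 / σ)), Real.exp_pos _, fun x => ?_⟩
  rw [← Real.exp_add]
  apply Real.exp_le_exp.2
  have := le_ell σ hσ x
  nlinarith

lemma le_EE (σ : ℝ) (hσ : 0 < σ) (m : ℝ) (hm : 0 < m) (x : ℝ) :
    Real.exp (-m * |x|) ≤ EE σ m x := by
  apply Real.exp_le_exp.2
  have := ell_le σ hσ x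
  nlinarith

lemma ell_neg (σ x : ℝ) : ell σ (-x) = ell σ x := by
  unfold ell; rw [mul_neg, Real.cosh_neg]

lemma EE_neg (σ m x : ℝ) : EE σ m (-x) = EE σ m x := by
  unfold EE; rw [ell_neg]

lemma EE_integrable (σ : ℝ) (hσ : 0 < σ) (m : ℝ) (hm : 0 < m) (z : ℝ → ℝ) (hz : Continuous z)
    (hb : Bd z) : Integrable (fun x => EE σ m x * z x) := by
  obtain ⟨C, hC, hE⟩ := EE_le σ hσ m hm
  obtain ⟨B, hB⟩ := hb
  have hB0 : 0 ≤ B := (abs_nonneg _).trans (hB 0)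
  have hcont : Continuous (fun x => EE σ m x * z x) := (EE_cont σ hσ m).mul hz
  have key : ∀ x, ‖EE σ m x * z x‖ ≤ C * B * Real.exp (-m * |x|) := by
    intro x
    rw [Real.norm_eq_abs, abs_mul, abs_of_pos (EE_pos σ m x)]
    have := hE x
    have := hB x
    have := EE_pos σ m x
    calc EE σ m x * |z x| ≤ (C * Real.exp (-m * |x|)) * B := by gcongr <;> linarith
      _ = _ := by ring
  rw [← integrableOn_univ, ← Set.Iic_union_Ioi (a := (0:ℝ))]
  refine IntegrableOn.union ?_ ?_
  · refine Integrable.mono' ((integrableOn_exp_mul_Iic hm 0).const_mul (C * B))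
      hcont.aestronglyMeasurable ?_
    refine (ae_restrict_iff' measurableSet_Iic).2 (Eventually.of_forall fun x hx => ?_)
    have := key x
    rw [abs_of_nonpos hx] at this
    simpa using this
  · refine Integrable.mono' ((integrableOn_exp_mul_Ioi (neg_lt_zero.2 hm) 0).const_mul (C * B))
      hcont.aestronglyMeasurable ?_
    refine (ae_restrict_iff' measurableSet_Ioi).2 (Eventually.of_forall fun x hx => ?_)
    have := key x
    rw [abs_of_pos hx] at this
    simpa using this

lemma tail_bd (σ : ℝ) (hσ : 0 < σ) (m : ℝ) (hm : 0 < m) (z : ℝ → ℝ)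
    (hb : Bd z) : ∃ K, ∀ x, 0 ≤ x → |∫ y in Ioi x, EE σ m y * z y| ≤ K * EE σ m x := by
  obtain ⟨C, hC, hE⟩ := EE_le σ hσ m hm
  obtain ⟨B, hB⟩ := hb
  have hB0 : 0 ≤ B := (abs_nonneg _).trans (hB 0)
  refine ⟨C * B / m, fun x hx => ?_⟩
  have h1 : ‖∫ y in Ioi x, EE σ m y * z y‖ ≤ ∫ y in Ioi x, C * B * Real.exp (-m * y) := by
    apply norm_integral_le_of_norm_le ((integrableOn_exp_mul_Ioi (neg_lt_zero.2 hm) x).const_mul _)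
    refine (ae_restrict_iff' measurableSet_Ioi).2 (Eventually.of_forall fun y hy => ?_)
    have hy' : 0 < y := lt_of_le_of_lt hx hy
    rw [Real.norm_eq_abs, abs_mul, abs_of_pos (EE_pos σ m y)]
    have h2 := hE y
    rw [abs_of_pos hy'] at h2
    have := hB y
    have := EE_pos σ m y
    calc EE σ m y * |z y| ≤ (C * Real.exp (-m * y)) * B := by gcongr <;> linarith
      _ = _ := by ring
  rw [integral_const_mul, integral_exp_mul_Ioi (neg_lt_zero.2 hm)] at h1
  have h3 := le_EE σ hσ m hm x
  rw [abs_of_nonneg hx] at h3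
  rw [← Real.norm_eq_abs]
  refine h1.trans ?_
  calc C * B * (-Real.exp (-m * x) / -m) = C * B / m * Real.exp (-m * x) := by field_simp
    _ ≤ _ := by gcongr

lemma inv_exists (σ : ℝ) (hσ : 0 < σ) (m : ℝ) (hm : 0 < m) (z : ℝ → ℝ) (hz : Continuous z)
    (hb : Bd z) : ∃ (k : ℝ) (η : ℝ → ℝ), Bd η ∧
      ∀ x, HasDerivAt η (m * tt σ x * η x - (z x + k * EE σ 1 x)) x := by
  have hφb : Bd (EE σ 1) := by
    obtain ⟨C, hC, hE⟩ := EE_le σ hσ 1 one_pos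
    refine ⟨C, fun x => ?_⟩
    rw [abs_of_pos (EE_pos _ _ _)]
    refine (hE x).trans ?_
    have : Real.exp (-1 * |x|) ≤ 1 := Real.exp_le_one_iff.2 (by have := abs_nonneg x; linarith)
    nlinarith
  have hi1 := EE_integrable σ hσ m hm z hz hb
  have hi2 := EE_integrable σ hσ m hm _ (EE_cont σ hσ 1) hφb
  have hpos : 0 < ∫ x, EE σ m x * EE σ 1 x := by
    apply integral_pos_of_integrable_nonneg_nonzero (x := 0)
      ((EE_cont σ hσ m).mul (EE_cont σ hσ 1)) hi2
    · intro x; exact (mul_pos (EE_pos _ _ _) (EE_pos _ _ _)).le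
    · exact (mul_pos (EE_pos _ _ _) (EE_pos _ _ _)).ne'
  set k : ℝ := - (∫ x, EE σ m x * z x) / ∫ x, EE σ m x * EE σ 1 x with hk
  set w : ℝ → ℝ := fun x => z x + k * EE σ 1 x with hw
  have hwc : Continuous w := hz.add ((EE_cont σ hσ 1).const_mul k)
  have hwb : Bd w := hb.add (hφb.cmul k)
  have hwi := EE_integrable σ hσ m hm w hwc hwb
  have hw0 : ∫ x, EE σ m x * w x = 0 := by
    have : ∀ x, EE σ m x * w x = EE σ m x * z x + k * (EE σ m x * EE σ 1 x) := by
      intro x; simp only [hw]; ring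
    simp only [this]
    rw [integral_add hi1 (hi2.const_mul k), integral_const_mul, hk]
    field_simp
    ring
  set J : ℝ → ℝ := fun x => ∫ y in Ioi x, EE σ m y * w y with hJ
  have hgc : Continuous (fun y => EE σ m y * w y) := (EE_cont σ hσ m).mul hwc
  have hJ2 : ∀ x, J x = (∫ y in Ioi 0, EE σ m y * w y) - ∫ y in (0:ℝ)..x, EE σ m y * w y := by
    intro x
    rcases le_total 0 x with h | h
    · rw [← intervalIntegral.integral_Ioi_sub_Ioi hwi.integrableOn h]
      simp [hJ]
    · rw [intervalIntegral.integral_symm,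
        ← intervalIntegral.integral_Ioi_sub_Ioi hwi.integrableOn h]
      simp [hJ]
  have hJd : ∀ x, HasDerivAt J (-(EE σ m x * w x)) x := by
    intro x
    have h1 := (intervalIntegral.integral_hasDerivAt_right (hgc.intervalIntegrable 0 x)
      (hgc.stronglyMeasurableAtFilter _ _) hgc.continuousAt).const_sub
        (∫ y in Ioi 0, EE σ m y * w y)
    exact h1.congr_of_eventuallyEq (Eventually.of_forall hJ2)
  refine ⟨k, fun x => J x / EE σ m x, ?_, ?_⟩
  · obtain ⟨K1, hK1⟩ := tail_bd σ hσ m hm w hwb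
    obtain ⟨K2, hK2⟩ := tail_bd σ hσ m hm (fun x => w (-x))
      (by obtain ⟨B, hB⟩ := hwb; exact ⟨B, fun x => hB (-x)⟩)
    refine ⟨max K1 K2, fun x => ?_⟩
    have hE := EE_pos σ m x
    rw [abs_div, abs_of_pos hE, div_le_iff₀ hE]
    rcases le_total 0 x with h | h
    · refine (hK1 x h).trans ?_
      gcongr
      exact le_max_left _ _
    · have h1 := hK2 (-x) (by linarith)
      have h2 : ∫ y in Ioi (-x), EE σ m y * w (-y) = - J x := by
        have h3 := integral_comp_neg_Ioi (-x) (fun y => EE σ m y * w y)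
        simp only [EE_neg, neg_neg] at h3
        rw [h3]
        have h4 := intervalIntegral.integral_Iic_add_Ioi (b := x) hwi.integrableOn hwi.integrableOn
        rw [hw0] at h4
        simp only [hJ]
        linarith
      rw [h2, abs_neg, EE_neg] at h1
      refine h1.trans ?_
      gcongr
      exact le_max_right _ _
  · intro x
    have hE := EE_pos σ m x
    refine ((hJd x).div (EE_deriv σ hσ m x) hE.ne').congr_deriv ?_
    field_simp
    ring

lemma phi_dec (σ : ℝ) (hσ : 0 < σ) (m : ℝ) (hm : 0 < m) (n : ℕ) :
    Dec (fun x => x ^ n * EE σ m x) := by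
  obtain ⟨C, hC, hE⟩ := EE_le σ hσ m hm
  have h1 : Tendsto (fun x : ℝ => C * (m⁻¹ ^ n * ((m * |x|) ^ n * Real.exp (-(m * |x|)))))
      (cocompact ℝ) (𝓝 0) := by
    have h2 : Tendsto (fun x : ℝ => m * |x|) (cocompact ℝ) atTop :=
      (tendsto_norm_cocompact_atTop (E := ℝ)).const_mul_atTop hm
    have := (((Real.tendsto_pow_mul_exp_neg_atTop_nhds_zero n).comp h2).const_mul
      (m⁻¹ ^ n)).const_mul C
    simpa [Function.comp_def] using this
  refine squeeze_zero_norm (fun x => ?_) h1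
  rw [norm_mul, norm_pow, Real.norm_eq_abs, Real.norm_eq_abs, abs_of_pos (EE_pos σ m x)]
  calc |x| ^ n * EE σ m x ≤ |x| ^ n * (C * Real.exp (-m * |x|)) := by gcongr; exact hE x
    _ = _ := by rw [mul_pow, neg_mul, inv_pow]; field_simp

lemma ss_eq (σ : ℝ) (hσ : 0 < σ) (x : ℝ) : 1 - tt σ x ^ 2 = EE σ (2 * σ) x := by
  rw [tt_sq]
  unfold EE ell
  have h := Real.cosh_pos (σ * x)
  have : -(2 * σ) * (Real.log (Real.cosh (σ * x)) / σ) = Real.log (1 / Real.cosh (σ * x) ^ 2) := by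
    rw [Real.log_div one_ne_zero (by positivity), Real.log_pow, Real.log_one]
    field_simp
    push_cast
    ring
  rw [this, Real.exp_log (by positivity)]

lemma ss_dec (σ : ℝ) (hσ : 0 < σ) : Dec (fun x => 1 - tt σ x ^ 2) := by
  have := phi_dec σ hσ (2 * σ) (by linarith) 0
  simp only [ss_eq σ hσ]
  simpa using this

lemma dec_bd {f : ℝ → ℝ} (hf : Dec f) (hc : Continuous f) : Bd f := by
  have h1 := (Metric.tendsto_nhds.1 hf) 1 one_pos
  obtain ⟨K, hK, hK2⟩ := mem_cocompact.1 h1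
  obtain ⟨C, hC⟩ := hK.exists_bound_of_continuousOn hc.continuousOn
  refine ⟨max C 1, fun x => ?_⟩
  by_cases hx : x ∈ K
  · exact (hC x hx).trans (le_max_left _ _)
  · have : dist (f x) 0 < 1 := hK2 hx
    rw [Real.dist_eq, sub_zero] at this
    exact this.le.trans (le_max_right _ _)

lemma dec_of_const_add {f g : ℝ → ℝ} (hf : Dec f) (h : ∀ x, g x = f x) : Dec g := by
  have : g = f := funext h
  rwa [this]

/-- bounded solutions of a first order unstable equation with decaying source decay -/
lemma dec_unst (σ : ℝ) (hσ : 0 < σ) (m : ℝ) (hm : 0 < m) (r e : ℝ → ℝ)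
    (hr : ∀ x, HasDerivAt r (m * tt σ x * r x + e x) x) (hB : Bd r) (he : Dec e) : Dec r := by
  have ht : Tendsto (fun x => tt σ x - 1) atTop (𝓝 0) := by
    have h1 := ((dec_iff _).1 (ss_dec σ hσ)).1
    refine squeeze_zero_norm' ?_ h1
    filter_upwards [eventually_ge_atTop 0] with x hx
    have h2 : 0 ≤ tt σ x := by
      unfold tt
      exact div_nonneg (Real.sinh_nonneg_iff.2 (by positivity)) (Real.cosh_pos _).le
    have h3 := ss_pos σ x
    rw [Real.norm_eq_abs, abs_le]
    constructor <;> nlinarith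
  have key : ∀ r e : ℝ → ℝ, (∀ x, HasDerivAt r (m * tt σ x * r x + e x) x) → Bd r →
      Tendsto e atTop (𝓝 0) → Tendsto r atTop (𝓝 0) := by
    intro r e hr hB he
    obtain ⟨B, hB⟩ := hB
    refine as_unst' m hm r (fun x => (tt σ x - 1) * (m * r x) + e x) (fun x => ?_) B hB ?_
    · exact (hr x).congr_deriv (by ring)
    · have h2 : Tendsto (fun x => (tt σ x - 1) * (m * r x)) atTop (𝓝 0) := by
        obtain ⟨C, hC⟩ := Bd.cmul m ⟨B, hB⟩
        exact ht.zero_mul_isBoundedUnder_le (isBoundedUnder_of ⟨C, fun y => hC y⟩)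
      simpa using h2.add he
  rw [dec_iff] at he ⊢
  refine ⟨key r e hr hB he.1, key (fun x => r (-x)) (fun x => - e (-x)) (fun x => ?_) ?_ ?_⟩
  · refine (hasDerivAt_refl (hr (-x))).congr_deriv ?_
    rw [tt_neg]; ring
  · obtain ⟨B, hB⟩ := hB; exact ⟨B, fun x => hB (-x)⟩
  · simpa using he.2.neg


lemma ident1 (σ : ℝ) (t y y1 z : ℝ → ℝ) (x : ℝ)
    (ht : HasDerivAt t (σ * (1 - t x ^ 2)) x) (hy : HasDerivAt y (y1 x) x)
    (hy1 : HasDerivAt y1 (y x - (σ + 1) * (1 - t x ^ 2) * y x - z x) x) :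
    HasDerivAt (fun x => (y1 x + t x * y x) * (t x * (y1 x + t x * y x) - y x))
      ((t x * (y1 x + t x * y x) - z x) ^ 2 + (σ - 1) * (1 - t x ^ 2) * (y1 x + t x * y x) ^ 2
        - z x * (z x - y x)) x := by
  have ha := hy1.add (ht.mul hy)
  refine (ha.mul ((ht.mul ha).sub hy)).congr_deriv ?_
  simp only [Pi.add_apply, Pi.mul_apply, Pi.sub_apply]
  ring

/-- `π = P ζ` -/
def pif (σ : ℝ) (t ζ η z : ℝ → ℝ) (x : ℝ) : ℝ := -ζ x + (σ + 2) * (t x * η x) - z x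

/-- derivative of `π` -/
def pi1 (σ : ℝ) (t ζ η z z1 : ℝ → ℝ) (x : ℝ) : ℝ :=
  -(t x * ζ x - η x) + (σ + 2) * (σ * (1 - t x ^ 2) * η x + t x * ((σ + 1) * t x * η x - z x)) - z1 x

/-- second derivative of `π` -/
def pi2 (σ : ℝ) (t ζ η z z1 w : ℝ → ℝ) (x : ℝ) : ℝ :=
  -(σ * (1 - t x ^ 2) * ζ x + t x * (t x * ζ x - η x) - ((σ + 1) * t x * η x - z x))
  + (σ + 2) * (σ * (- 2 * t x * (σ * (1 - t x ^ 2))) * η x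
      + σ * (1 - t x ^ 2) * ((σ + 1) * t x * η x - z x)
      + σ * (1 - t x ^ 2) * ((σ + 1) * t x * η x - z x)
      + t x * ((σ + 1) * (σ * (1 - t x ^ 2) * η x + t x * ((σ + 1) * t x * η x - z x)) - z1 x))
  - (z x - (2 * σ + 1) * (σ + 1) * (1 - t x ^ 2) * z x - w x)

lemma pif_deriv (σ : ℝ) (t ζ η z z1 : ℝ → ℝ) (x : ℝ)
    (ht : HasDerivAt t (σ * (1 - t x ^ 2)) x)
    (hζ : HasDerivAt ζ (t x * ζ x - η x) x)
    (hη : HasDerivAt η ((σ + 1) * t x * η x - z x) x) (hz : HasDerivAt z (z1 x) x) :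
    HasDerivAt (pif σ t ζ η z) (pi1 σ t ζ η z z1 x) x := by
  refine ((hζ.neg.add ((ht.mul hη).const_mul (σ + 2))).sub hz).congr_deriv ?_
  unfold pi1
  ring

lemma pi1_deriv (σ : ℝ) (t ζ η z z1 w : ℝ → ℝ) (x : ℝ)
    (ht : HasDerivAt t (σ * (1 - t x ^ 2)) x)
    (hζ : HasDerivAt ζ (t x * ζ x - η x) x)
    (hη : HasDerivAt η ((σ + 1) * t x * η x - z x) x) (hz : HasDerivAt z (z1 x) x)
    (hz1 : HasDerivAt z1 (z x - (2 * σ + 1) * (σ + 1) * (1 - t x ^ 2) * z x - w x) x) :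
    HasDerivAt (pi1 σ t ζ η z z1) (pi2 σ t ζ η z z1 w x) x := by
  have hs := ((ht.pow 2).const_sub 1).const_mul σ
  have h := (((ht.mul hζ).sub hη).neg.add
    (((hs.mul hη).add (ht.mul (((ht.const_mul (σ + 1)).mul hη).sub hz))).const_mul (σ + 2))).sub hz1
  refine h.congr_deriv ?_
  simp only [Pi.pow_apply, Pi.mul_apply, Pi.sub_apply, pi2]
  push_cast
  ring

/-- boundary term -/
def bdr (σ : ℝ) (t ζ η z z1 : ℝ → ℝ) (x : ℝ) : ℝ :=
  (z x + ((1 + σ * (σ + 2)) * ζ x + pif σ t ζ η z x)) *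
      (t x * pif σ t ζ η z x - pi1 σ t ζ η z z1 x)
    + (1 + σ * (σ + 2)) * (ζ x * (t x * ζ x - η x) - (t x * ζ x - η x) * pif σ t ζ η z x
      + ζ x * pi1 σ t ζ η z z1 x)
    + pif σ t ζ η z x * pi1 σ t ζ η z z1 x

def qtwo (σ : ℝ) (t ζ η z z1 : ℝ → ℝ) (x : ℝ) : ℝ :=
  (1 + σ * (σ + 2)) * ((t x * ζ x - η x) ^ 2 + (σ - 1) * (1 - t x ^ 2) * ζ x ^ 2)
    + (2 + σ * (σ + 2)) * pif σ t ζ η z x ^ 2 + pi1 σ t ζ η z z1 x ^ 2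
    + (σ - 1) * (1 - t x ^ 2) * pif σ t ζ η z x ^ 2

lemma ident2 (σ : ℝ) (t ζ η z z1 w : ℝ → ℝ) (x : ℝ)
    (ht : HasDerivAt t (σ * (1 - t x ^ 2)) x)
    (hζ : HasDerivAt ζ (t x * ζ x - η x) x)
    (hη : HasDerivAt η ((σ + 1) * t x * η x - z x) x) (hz : HasDerivAt z (z1 x) x)
    (hz1 : HasDerivAt z1 (z x - (2 * σ + 1) * (σ + 1) * (1 - t x ^ 2) * z x - w x) x) :
    HasDerivAt (bdr σ t ζ η z z1) (qtwo σ t ζ η z z1 x - z x * (w x - z x)) x := by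
  have hp := pif_deriv σ t ζ η z z1 x ht hζ hη hz
  have hp1 := pi1_deriv σ t ζ η z z1 w x ht hζ hη hz hz1
  have hζ1 := (ht.mul hζ).sub hη
  have h := (((hz.add ((hζ.const_mul (1 + σ * (σ + 2))).add hp)).mul ((ht.mul hp).sub hp1)).add
    ((((hζ.mul hζ1).sub (hζ1.mul hp)).add (hζ.mul hp1)).const_mul (1 + σ * (σ + 2)))).add
    (hp.mul hp1)
  refine h.congr_deriv ?_
  simp only [Pi.add_apply, Pi.mul_apply, Pi.sub_apply, qtwo]
  simp only [pif, pi1, pi2]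
  ring

/-- explicit boundary term -/
def sbd (σ c₁ c₂ : ℝ) (t φ u u1 v v1 : ℝ → ℝ) (x : ℝ) : ℝ :=
  c₁ * (2 * t x * φ x * u1 x - u x * (2 * σ * (1 - t x ^ 2) * φ x - 2 * t x ^ 2 * φ x)
      + x * φ x * v1 x - v x * (φ x - x * t x * φ x))
  + c₂ * ((-2 + 4 * x * t x) * φ x * u1 x
      - u x * ((4 * t x + 4 * x * (σ * (1 - t x ^ 2))) * φ x - t x * (-2 + 4 * x * t x) * φ x)
      + x ^ 2 * φ x * v1 x - v x * (2 * x * φ x - x ^ 2 * t x * φ x))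
  + c₁ ^ 2 * (x * φ x ^ 2)
  + c₂ ^ 2 * (-16 * (x * φ x ^ 2) - 8 * (σ - 2) * (x * (1 - t x ^ 2) * φ x ^ 2) + 2 * (x ^ 3 * φ x ^ 2))
  + c₁ * c₂ * (-8 * φ x ^ 2 - 4 * (σ - 2) * ((1 - t x ^ 2) * φ x ^ 2) + 3 * (x ^ 2 * φ x ^ 2))

lemma ident3 (σ c₁ c₂ : ℝ) (t φ u u1 v v1 : ℝ → ℝ) (x : ℝ)
    (ht : HasDerivAt t (σ * (1 - t x ^ 2)) x) (hφ : HasDerivAt φ (-1 * t x * φ x) x)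
    (hu : HasDerivAt u (u1 x) x)
    (hu1 : HasDerivAt u1 (u x - (2 * σ + 1) * (σ + 1) * (1 - t x ^ 2) * u x - v x) x)
    (hv : HasDerivAt v (v1 x) x)
    (hv1 : HasDerivAt v1 (v x - (σ + 1) * (1 - t x ^ 2) * v x - u x) x) :
    HasDerivAt (sbd σ c₁ c₂ t φ u u1 v v1)
      ((u x + c₁ * (2 * t x * φ x) + c₂ * ((-2 + 4 * x * t x) * φ x)) *
        (c₂ * (8 * φ x + 4 * (σ - 2) * (σ + 1) * (1 - t x ^ 2) * φ x) - c₁ * (x * φ x)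
          - c₂ * (x ^ 2 * φ x))
        + c₁ ^ 2 * φ x ^ 2
        + c₂ ^ 2 * (4 * x ^ 2 * φ x ^ 2 + 8 * σ * (σ - 2) * (1 - t x ^ 2) * φ x ^ 2)
        + 4 * c₁ * c₂ * (x * φ x ^ 2)) x := by
  have hx := hasDerivAt_id x
  have hs := (ht.pow 2).const_sub 1
  have hφ2 := hφ.pow 2
  have h1 := ((((ht.const_mul 2).mul hφ).mul hu1).sub (hu.mul (((hs.const_mul (2 * σ)).mul hφ).sub
    (((ht.pow 2).const_mul 2).mul hφ)))).add (((hx.mul hφ).mul hv1)) |>.sub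
    (hv.mul (hφ.sub ((hx.mul ht).mul hφ)))
  have hxt := (((hx.const_mul 4).mul ht).const_add (-2))
  have h2 := ((((hxt.mul hφ).mul hu1).sub
    (hu.mul ((((ht.const_mul 4).add ((hx.const_mul 4).mul (hs.const_mul σ))).mul hφ).sub
      ((ht.mul hxt).mul hφ)))).add (((hx.pow 2).mul hφ).mul hv1)).sub
      (hv.mul (((hx.const_mul 2).mul hφ).sub (((hx.pow 2).mul ht).mul hφ)))
  have h4 := (((hx.mul hφ2).const_mul (-16)).sub
    (((hx.mul hs).mul hφ2).const_mul (8 * (σ - 2)))).add (((hx.pow 3).mul hφ2).const_mul 2)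
  have h5 := ((hφ2.const_mul (-8)).sub ((hs.mul hφ2).const_mul (4 * (σ - 2)))).add
    (((hx.pow 2).mul hφ2).const_mul 3)
  have h := ((((h1.const_mul c₁).add (h2.const_mul c₂)).add
    ((hx.mul hφ2).const_mul (c₁ ^ 2))).add (h4.const_mul (c₂ ^ 2))).add (h5.const_mul (c₁ * c₂))
  refine h.congr_deriv ?_
  simp only [Pi.add_apply, Pi.mul_apply, Pi.sub_apply, Pi.pow_apply, id]
  push_cast
  ring


lemma const_of_mono (G G' F0 : ℝ → ℝ) (hG : ∀ x, HasDerivAt G (G' x) x) (hG0 : ∀ x, 0 ≤ G' x)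
    (hd : ∀ x, G x - G (-x) = F0 x - F0 (-x)) (hF : Dec F0) (x : ℝ) : G' x = 0 := by
  have hm : Monotone G := monotone_of_hasDerivAt_nonneg hG hG0
  obtain ⟨h1, h2⟩ := (dec_iff _).1 hF
  have h3 : Tendsto (fun x => G x - G (-x)) atTop (𝓝 0) := by
    simp only [hd]; simpa using h1.sub h2
  have hc : ∀ b, G b = G 0 := by
    intro b
    have key : |G b - G 0| ≤ 0 := by
      apply ge_of_tendsto h3
      filter_upwards [eventually_ge_atTop |b|] with y hy
      have ha := hm (show b ≤ y from (le_abs_self b).trans hy)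
      have hb := hm (show -y ≤ b by have := neg_abs_le b; linarith)
      have hy0 : 0 ≤ y := (abs_nonneg b).trans hy
      have hc := hm hy0
      have hd := hm (show -y ≤ 0 by linarith)
      rw [abs_le]; constructor <;> linarith
    have := abs_nonpos_iff.1 key
    linarith
  have : G = fun _ => G 0 := funext hc
  have h4 := hG x
  rw [this] at h4
  exact h4.unique (hasDerivAt_const x _)

lemma decay_uv (σ : ℝ) (hσ : 0 < σ) (u u1 v v1 : ℝ → ℝ)
    (hu : ∀ x, HasDerivAt u (u1 x) x)
    (hu1 : ∀ x, HasDerivAt u1 (u x - (2 * σ + 1) * (σ + 1) * (1 - tt σ x ^ 2) * u x - v x) x)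
    (hv : ∀ x, HasDerivAt v (v1 x) x)
    (hv1 : ∀ x, HasDerivAt v1 (v x - (σ + 1) * (1 - tt σ x ^ 2) * v x - u x) x)
    (hbu : Bd u) (hbv : Bd v) : Dec u1 ∧ Dec v1 := by
  have hs := ss_dec σ hσ
  have hsc : Continuous (fun x => 1 - tt σ x ^ 2) := by
    have : Continuous (tt σ) := continuous_iff_continuousAt.2 fun x => (tt_deriv σ x).continuousAt
    fun_prop
  have hsb := dec_bd hs hsc
  have hp1 : Dec (fun x => u1 x + v1 x) := by
    refine dec_landau (fun x => u x + v x) _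
      (fun x => (1 - tt σ x ^ 2) * ((-(σ + 1) * (2 * σ + 1)) * u x + (-(σ + 1)) * v x))
      (fun x => (hu x).add (hv x)) (fun x => ((hu1 x).add (hv1 x)).congr_deriv (by ring))
      (hbu.add hbv) (hs.mul_bd ((hbu.cmul _).add (hbv.cmul _)))
  have hq1 : Dec (fun x => u1 x - v1 x) := by
    refine dec_osc (fun x => u x - v x) _
      (fun x => (1 - tt σ x ^ 2) * ((-(σ + 1) * (2 * σ + 1)) * u x + (σ + 1) * v x))
      (fun x => (hu x).sub (hv x)) (fun x => ((hu1 x).sub (hv1 x)).congr_deriv (by ring))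
      (hbu.sub hbv) (hs.mul_bd ((hbu.cmul _).add (hbv.cmul _)))
      (hsb.mul ((hbu.cmul _).add (hbv.cmul _)))
  constructor
  · exact dec_of_const_add ((hp1.add hq1).cmul (1/2)) (fun x => by ring)
  · exact dec_of_const_add ((hp1.sub hq1).cmul (1/2)) (fun x => by ring)

lemma bdr_dec (σ : ℝ) (hσ : 0 < σ) (ζ η z z1 : ℝ → ℝ)
    (hζ : ∀ x, HasDerivAt ζ (tt σ x * ζ x - η x) x)
    (hη : ∀ x, HasDerivAt η ((σ + 1) * tt σ x * η x - z x) x) (hz : ∀ x, HasDerivAt z (z1 x) x)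
    (hbζ : Bd ζ) (hbη : Bd η) (hbz : Bd z) (hz1 : Dec z1) : Dec (bdr σ (tt σ) ζ η z z1) := by
  have hs := ss_dec σ hσ
  have hbt := tt_bd σ
  have hη1 : Dec (fun x => (σ + 1) * (tt σ x * η x) - z x) := by
    refine dec_unst σ hσ (σ + 1) (by linarith) _
      (fun x => (1 - tt σ x ^ 2) * ((σ + 1) * σ * η x) - z1 x) (fun x => ?_)
      (((hbt.mul hbη).cmul _).sub hbz) ((hs.mul_bd (hbη.cmul _)).sub hz1)
    exact ((((tt_deriv σ x).mul (hη x)).const_mul (σ + 1)).sub (hz x)).congr_deriv (by ring)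
  have hζ1 : Dec (fun x => tt σ x * ζ x - η x) := by
    refine dec_unst σ hσ 1 one_pos _
      (fun x => (1 - tt σ x ^ 2) * (σ * ζ x) - ((σ + 1) * (tt σ x * η x) - z x)) (fun x => ?_)
      ((hbt.mul hbζ).sub hbη) ((hs.mul_bd (hbζ.cmul _)).sub hη1)
    exact (((tt_deriv σ x).mul (hζ x)).sub (hη x)).congr_deriv (by ring)
  have hπ : Dec (pif σ (tt σ) ζ η z) := by
    refine dec_of_const_add ((hη1.sub (hbt.mul (Bd.const 1) |> fun h => Dec.bd_mul h hζ1)).sub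
      (hs.mul_bd hbζ)) (fun x => ?_)
    unfold pif
    ring
  have hπ1 : Dec (pi1 σ (tt σ) ζ η z z1) := by
    refine dec_of_const_add (((((hs.mul_bd (hbη.cmul σ)).add (Dec.bd_mul hbt hη1)).cmul
      (σ + 2)).sub hζ1).sub hz1) (fun x => ?_)
    unfold pi1
    ring
  have hbτ : Bd (fun x => z x + (1 + σ * (σ + 2)) * ζ x) := hbz.add (hbζ.cmul _)
  have hA := (Dec.bd_mul hbt hπ).sub hπ1
  have hcπ : Dec (fun x => pif σ (tt σ) ζ η z x * (tt σ x * pif σ (tt σ) ζ η z x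
      - pi1 σ (tt σ) ζ η z z1 x)) := by
    simpa [Dec] using Tendsto.mul hπ hA
  have hc1 : Dec (fun x => (tt σ x * ζ x - η x) * pif σ (tt σ) ζ η z x) := by
    simpa [Dec] using Tendsto.mul hζ1 hπ
  have hc2 : Dec (fun x => pif σ (tt σ) ζ η z x * pi1 σ (tt σ) ζ η z z1 x) := by
    simpa [Dec] using Tendsto.mul hπ hπ1
  refine dec_of_const_add ((((Dec.bd_mul hbτ hA).add hcπ).add
    ((((Dec.bd_mul hbζ hζ1).sub hc1).add (Dec.bd_mul hbζ hπ1)).cmul (1 + σ * (σ + 2)))).add hc2)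
    (fun x => ?_)
  unfold bdr
  ring

lemma sbd_dec (σ : ℝ) (hσ : 0 < σ) (c₁ c₂ : ℝ) (u u1 v v1 : ℝ → ℝ) (hbu : Bd u) (hbv : Bd v)
    (hbu1 : Bd u1) (hbv1 : Bd v1) : Dec (sbd σ c₁ c₂ (tt σ) (EE σ 1) u u1 v v1) := by
  have hbt := tt_bd σ
  have h0 : Dec (EE σ 1) := by simpa using phi_dec σ hσ 1 one_pos 0
  have hbφ : Bd (EE σ 1) := dec_bd h0 (EE_cont σ hσ 1)
  have h1 : Dec (fun x => x * EE σ 1 x) := by simpa using phi_dec σ hσ 1 one_pos 1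
  have h2 := phi_dec σ hσ 1 one_pos 2
  have h3 := phi_dec σ hσ 1 one_pos 3
  have hbs : Bd (fun x => 1 - tt σ x * tt σ x) := (Bd.const 1).sub (hbt.mul hbt)
  have e0 : Bd (fun x => c₁ * (2 * (tt σ x * u1 x)
      - u x * (2 * σ * (1 - tt σ x * tt σ x) - 2 * (tt σ x * tt σ x)) - v x)
      + c₂ * (-2 * u1 x - u x * (4 * tt σ x + 2 * tt σ x) - 0)
      + c₁ * c₂ * (-8 * EE σ 1 x - 4 * (σ - 2) * ((1 - tt σ x * tt σ x) * EE σ 1 x))) :=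
    ((((((hbt.mul hbu1).cmul 2).sub (hbu.mul ((hbs.cmul (2*σ)).sub ((hbt.mul hbt).cmul 2)))).sub
      hbv).cmul c₁).add
      (((hbu1.cmul (-2)).sub (hbu.mul ((hbt.cmul 4).add (hbt.cmul 2)))).sub (Bd.const 0) |>.cmul c₂)).add
      (((hbφ.cmul (-8)).sub ((hbs.mul hbφ).cmul (4 * (σ - 2)))).cmul (c₁ * c₂))
  have e1 : Bd (fun x => c₁ * (v1 x + v x * tt σ x)
      + c₂ * (4 * (tt σ x * u1 x) - u x * (4 * σ * (1 - tt σ x * tt σ x) - 4 * (tt σ x * tt σ x))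
        - 2 * v x)
      + (c₁ ^ 2 * EE σ 1 x + c₂ ^ 2 * (-16 * EE σ 1 x
        - 8 * (σ - 2) * ((1 - tt σ x * tt σ x) * EE σ 1 x)))) :=
    (((hbv1.add (hbv.mul hbt)).cmul c₁).add
      (((((hbt.mul hbu1).cmul 4).sub (hbu.mul ((hbs.cmul (4*σ)).sub ((hbt.mul hbt).cmul 4)))).sub
      (hbv.cmul 2)).cmul c₂)).add
      ((hbφ.cmul _).add (((hbφ.cmul (-16)).sub ((hbs.mul hbφ).cmul (8 * (σ - 2)))).cmul _))
  have e2 : Bd (fun x => c₂ * (v1 x + v x * tt σ x) + c₁ * c₂ * 3 * EE σ 1 x) :=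
    ((hbv1.add (hbv.mul hbt)).cmul c₂).add (hbφ.cmul _)
  have e3 : Bd (fun x => c₂ ^ 2 * 2 * EE σ 1 x) := hbφ.cmul _
  refine dec_of_const_add ((((h0.mul_bd e0).add (h1.mul_bd e1)).add (h2.mul_bd e2)).add
    (h3.mul_bd e3)) (fun x => ?_)
  unfold sbd
  ring

lemma real_case (σ : ℝ) (hσ : 2 ≤ σ) (u u1 v v1 : ℝ → ℝ)
    (hu : ∀ x, HasDerivAt u (u1 x) x)
    (hu1 : ∀ x, HasDerivAt u1 (u x - (2 * σ + 1) * (σ + 1) * (1 - tt σ x ^ 2) * u x - v x) x)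
    (hv : ∀ x, HasDerivAt v (v1 x) x)
    (hv1 : ∀ x, HasDerivAt v1 (v x - (σ + 1) * (1 - tt σ x ^ 2) * v x - u x) x)
    (hbu : Bd u) (hbv : Bd v) : ∀ x, u x = 0 ∧ v x = 0 := by
  have hσ0 : 0 < σ := by linarith
  have hφd := EE_deriv σ hσ0 1
  have htd := tt_deriv σ
  have hbt := tt_bd σ
  have hcont : ∀ {f f' : ℝ → ℝ}, (∀ x, HasDerivAt f (f' x) x) → Continuous f :=
    fun h => continuous_iff_continuousAt.2 fun x => (h x).continuousAt
  obtain ⟨du1, dv1⟩ := decay_uv σ hσ0 u u1 v v1 hu hu1 hv hv1 hbu hbv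
  have hbu1 : Bd u1 := dec_bd du1 (hcont hu1)
  have hbv1 : Bd v1 := dec_bd dv1 (hcont hv1)
  have h0 : Dec (EE σ 1) := by simpa using phi_dec σ hσ0 1 one_pos 0
  have hbφ : Bd (EE σ 1) := dec_bd h0 (EE_cont σ hσ0 1)
  have h1 : Dec (fun x => x * EE σ 1 x) := by simpa using phi_dec σ hσ0 1 one_pos 1
  have hb1 : Bd (fun x => x * EE σ 1 x) := dec_bd h1 (continuous_id.mul (EE_cont σ hσ0 1))
  have h2 := phi_dec σ hσ0 1 one_pos 2
  have hb2 : Bd (fun x => x ^ 2 * EE σ 1 x) :=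
    dec_bd h2 ((continuous_id.pow 2).mul (EE_cont σ hσ0 1))
  -- first inversion
  obtain ⟨k, η0, hbη0, hη0⟩ := inv_exists σ hσ0 (σ + 1) (by linarith) u (hcont hu) hbu
  set c₂ : ℝ := -k * (σ + 2) / (2 * σ) with hc₂
  have hk : k = -2 * σ / (σ + 2) * c₂ := by rw [hc₂]; field_simp
  set ηa : ℝ → ℝ := fun x => η0 x + c₂ * (4 / (σ + 2)) * (x * EE σ 1 x) with hηa
  have hηad : ∀ x, HasDerivAt ηa ((σ + 1) * tt σ x * ηa x
      - (u x + c₂ * ((-2 + 4 * x * tt σ x) * EE σ 1 x))) x := by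
    intro x
    refine ((hη0 x).add (((hasDerivAt_id x).mul (hφd x)).const_mul
      (c₂ * (4 / (σ + 2))))).congr_deriv ?_
    simp only [hηa, id, hk]
    field_simp
    ring
  have hbηa : Bd ηa := hbη0.add (hb1.cmul _)
  obtain ⟨k', ζ, hbζ, hζ⟩ := inv_exists σ hσ0 1 one_pos ηa (hcont hηad) hbηa
  set c₁ : ℝ := k' * (σ + 2) / 2 with hc₁
  have hk' : k' = 2 * c₁ / (σ + 2) := by rw [hc₁]; field_simp
  set η : ℝ → ℝ := fun x => ηa x + k' * EE σ 1 x with hη'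
  set z : ℝ → ℝ := fun x => u x + c₁ * (2 * tt σ x * EE σ 1 x)
    + c₂ * ((-2 + 4 * x * tt σ x) * EE σ 1 x) with hz'
  have hη : ∀ x, HasDerivAt η ((σ + 1) * tt σ x * η x - z x) x := by
    intro x
    refine ((hηad x).add ((hφd x).const_mul k')).congr_deriv ?_
    simp only [hη', hz', hk']
    field_simp
    ring
  have hζd : ∀ x, HasDerivAt ζ (tt σ x * ζ x - η x) x :=
    fun x => (hζ x).congr_deriv (by simp only [hη']; ring)
  have hbη : Bd η := hbηa.add (hbφ.cmul _)
  set z1 : ℝ → ℝ := fun x => u1 x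
    + c₁ * (2 * σ * (1 - tt σ x ^ 2) * EE σ 1 x - 2 * tt σ x ^ 2 * EE σ 1 x)
    + c₂ * ((4 * tt σ x + 4 * x * (σ * (1 - tt σ x ^ 2))) * EE σ 1 x
      - tt σ x * (-2 + 4 * x * tt σ x) * EE σ 1 x) with hz1'
  set w : ℝ → ℝ := fun x => v x
    + c₂ * (8 * EE σ 1 x + 4 * (σ - 2) * (σ + 1) * (1 - tt σ x ^ 2) * EE σ 1 x) with hw'
  set y : ℝ → ℝ := fun x => v x + c₁ * (x * EE σ 1 x) + c₂ * (x ^ 2 * EE σ 1 x) with hy'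
  set y1 : ℝ → ℝ := fun x => v1 x + c₁ * (EE σ 1 x - x * tt σ x * EE σ 1 x)
    + c₂ * (2 * x * EE σ 1 x - x ^ 2 * tt σ x * EE σ 1 x) with hy1'
  have hz : ∀ x, HasDerivAt z (z1 x) x := by
    intro x
    have hx := hasDerivAt_id x
    have hxt := (((hx.const_mul 4).mul (htd x)).const_add (-2))
    refine (((hu x).add ((((htd x).const_mul 2).mul (hφd x)).const_mul c₁)).add
      ((hxt.mul (hφd x)).const_mul c₂)).congr_deriv ?_
    simp only [hz1', Pi.mul_apply, id]
    ring
  have hz1 : ∀ x, HasDerivAt z1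
      (z x - (2 * σ + 1) * (σ + 1) * (1 - tt σ x ^ 2) * z x - w x) x := by
    intro x
    have hx := hasDerivAt_id x
    have hxt := (((hx.const_mul 4).mul (htd x)).const_add (-2))
    have hs := ((htd x).pow 2).const_sub 1
    refine (((hu1 x).add ((((hs.const_mul (2 * σ)).mul (hφd x)).sub
      ((((htd x).pow 2).const_mul 2).mul (hφd x))).const_mul c₁)).add
      ((((((htd x).const_mul 4).add ((hx.const_mul 4).mul (hs.const_mul σ))).mul (hφd x)).sub
        (((htd x).mul hxt).mul (hφd x))).const_mul c₂)).congr_deriv ?_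
    simp only [hz', hw', Pi.mul_apply, Pi.add_apply, Pi.pow_apply, id]
    push_cast
    ring
  have hy : ∀ x, HasDerivAt y (y1 x) x := by
    intro x
    have hx := hasDerivAt_id x
    refine (((hv x).add ((hx.mul (hφd x)).const_mul c₁)).add
      (((hx.pow 2).mul (hφd x)).const_mul c₂)).congr_deriv ?_
    simp only [hy1', Pi.pow_apply, id]
    push_cast
    ring
  have hy1 : ∀ x, HasDerivAt y1 (y x - (σ + 1) * (1 - tt σ x ^ 2) * y x - z x) x := by
    intro x
    have hx := hasDerivAt_id x
    refine (((hv1 x).add (((hφd x).sub ((hx.mul (htd x)).mul (hφd x))).const_mul c₁)).add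
      ((((hx.const_mul 2).mul (hφd x)).sub
        (((hx.pow 2).mul (htd x)).mul (hφd x))).const_mul c₂)).congr_deriv ?_
    simp only [hy', hz', Pi.mul_apply, Pi.pow_apply, id]
    push_cast
    ring
  have hbs : Bd (fun x => 1 - tt σ x * tt σ x) := (Bd.const 1).sub (hbt.mul hbt)
  have hbz : Bd z := by
    have := (hbu.add (((hbt.mul hbφ).cmul 2).cmul c₁)).add
      (((hbφ.cmul (-2)).add ((hbt.mul hb1).cmul 4)).cmul c₂)
    obtain ⟨B, hB⟩ := this
    refine ⟨B, fun x => ?_⟩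
    convert hB x using 2
    simp only [hz']; ring
  have hby : Bd y := (hbv.add (hb1.cmul c₁)).add (hb2.cmul c₂)
  have dz1 : Dec z1 := by
    have e0 : Bd (fun x => c₁ * (2 * σ * (1 - tt σ x * tt σ x) - 2 * (tt σ x * tt σ x))
        + c₂ * (6 * tt σ x)) :=
      (((hbs.cmul (2 * σ)).sub ((hbt.mul hbt).cmul 2)).cmul c₁).add ((hbt.cmul 6).cmul c₂)
    have e1 : Bd (fun x => c₂ * (4 * σ * (1 - tt σ x * tt σ x) - 4 * (tt σ x * tt σ x))) :=
      ((hbs.cmul (4 * σ)).sub ((hbt.mul hbt).cmul 4)).cmul c₂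
    refine dec_of_const_add ((du1.add (h0.mul_bd e0)).add (h1.mul_bd e1)) (fun x => ?_)
    simp only [hz1']; ring
  have dy1 : Dec y1 := by
    have e1 : Bd (fun x => c₁ * (-1 * tt σ x) + 2 * c₂) :=
      ((hbt.cmul (-1)).cmul c₁).add (Bd.const _)
    refine dec_of_const_add (((dv1.add (h0.cmul c₁)).add (h1.mul_bd e1)).add
      (h2.mul_bd (hbt.cmul (-c₂)))) (fun x => ?_)
    simp only [hy1']; ring
  have dP : Dec (fun x => (y1 x + tt σ x * y x) * (tt σ x * (y1 x + tt σ x * y x) - y x)) := by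
    have e0 : Bd (fun x => y1 x + tt σ x * y x) := (dec_bd dy1 (hcont hy1)).add (hbt.mul hby)
    have e1 : Dec (fun x => tt σ x * y1 x - (1 - tt σ x ^ 2) * y x) :=
      (Dec.bd_mul hbt dy1).sub ((ss_dec σ hσ0).mul_bd hby)
    refine dec_of_const_add (Dec.bd_mul e0 e1) (fun x => ?_)
    ring
  have dR := bdr_dec σ hσ0 ζ η z z1 hζd hη hz hbζ hbη hbz dz1
  have dS := sbd_dec σ hσ0 c₁ c₂ u u1 v v1 hbu hbv hbu1 hbv1
  set X : ℝ → ℝ := fun x => ∫ r in (0:ℝ)..x, r * EE σ 1 r ^ 2 with hX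
  have hXc : Continuous (fun r => r * EE σ 1 r ^ 2) := continuous_id.mul ((EE_cont σ hσ0 1).pow 2)
  have hXd : ∀ x, HasDerivAt X (x * EE σ 1 x ^ 2) x := fun x =>
    intervalIntegral.integral_hasDerivAt_right (hXc.intervalIntegrable 0 x)
      (hXc.stronglyMeasurableAtFilter _ _) hXc.continuousAt
  have hXe : ∀ x, X (-x) = X x := by
    intro x
    have := intervalIntegral.integral_comp_neg (a := 0) (b := x) (fun r => r * EE σ 1 r ^ 2)
    simp only [EE_neg, neg_zero, neg_mul, intervalIntegral.integral_neg] at this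
    have h9 := intervalIntegral.integral_symm (μ := volume) (f := fun r => r * EE σ 1 r ^ 2) (-x) 0
    simp only [hX]
    linarith
  have hs := ss_pos σ
  have hQ := const_of_mono
    (fun x => bdr σ (tt σ) ζ η z z1 x
      + (y1 x + tt σ x * y x) * (tt σ x * (y1 x + tt σ x * y x) - y x)
      + sbd σ c₁ c₂ (tt σ) (EE σ 1) u u1 v v1 x - 4 * c₁ * c₂ * X x)
    (fun x => qtwo σ (tt σ) ζ η z z1 x
      + ((tt σ x * (y1 x + tt σ x * y x) - z x) ^ 2
        + (σ - 1) * (1 - tt σ x ^ 2) * (y1 x + tt σ x * y x) ^ 2)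
      + c₁ ^ 2 * EE σ 1 x ^ 2
      + c₂ ^ 2 * (4 * x ^ 2 * EE σ 1 x ^ 2 + 8 * σ * (σ - 2) * (1 - tt σ x ^ 2) * EE σ 1 x ^ 2))
    (fun x => bdr σ (tt σ) ζ η z z1 x
      + (y1 x + tt σ x * y x) * (tt σ x * (y1 x + tt σ x * y x) - y x)
      + sbd σ c₁ c₂ (tt σ) (EE σ 1) u u1 v v1 x)
    (fun x => by
      refine ((((ident2 σ (tt σ) ζ η z z1 w x (htd x) (hζd x) (hη x) (hz x) (hz1 x)).add
        (ident1 σ (tt σ) y y1 z x (htd x) (hy x) (hy1 x))).add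
        (ident3 σ c₁ c₂ (tt σ) (EE σ 1) u u1 v v1 x (htd x) (hφd x) (hu x) (hu1 x) (hv x)
          (hv1 x))).sub ((hXd x).const_mul (4 * c₁ * c₂))).congr_deriv ?_
      simp only [hw', hy', hz']
      ring)
    (fun x => by
      have := hs x
      have h3 : 0 ≤ σ - 1 := by linarith
      have h4 : 0 ≤ σ - 2 := by linarith
      unfold qtwo
      positivity)
    (fun x => by
      simp only [hXe]; ring)
    ((dR.add dP).add dS)
  have h3 : 0 < σ - 1 := by linarith
  have h4 : 0 ≤ σ - 2 := by linarith
  have hq0 : ∀ x, 0 ≤ qtwo σ (tt σ) ζ η z z1 x := fun x => by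
    have := hs x
    unfold qtwo
    positivity
  have hsplit : ∀ x, qtwo σ (tt σ) ζ η z z1 x = 0 ∧ c₁ ^ 2 * EE σ 1 x ^ 2 = 0 ∧
      c₂ ^ 2 * (4 * x ^ 2 * EE σ 1 x ^ 2 + 8 * σ * (σ - 2) * (1 - tt σ x ^ 2) * EE σ 1 x ^ 2) = 0 := by
    intro x
    have hx := hQ x
    have a1 := hq0 x
    have := hs x
    have a2 : 0 ≤ (tt σ x * (y1 x + tt σ x * y x) - z x) ^ 2
        + (σ - 1) * (1 - tt σ x ^ 2) * (y1 x + tt σ x * y x) ^ 2 := by positivity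
    have a3 : 0 ≤ c₁ ^ 2 * EE σ 1 x ^ 2 := by positivity
    have a4 : 0 ≤ c₂ ^ 2 * (4 * x ^ 2 * EE σ 1 x ^ 2
      + 8 * σ * (σ - 2) * (1 - tt σ x ^ 2) * EE σ 1 x ^ 2) := by positivity
    refine ⟨?_, ?_, ?_⟩ <;> linarith
  have hζ0 : ∀ x, ζ x = 0 := by
    intro x
    have hx := (hsplit x).1
    by_contra hne
    have := hs x
    have : 0 < qtwo σ (tt σ) ζ η z z1 x := by
      unfold qtwo
      positivity
    linarith
  have hη0' : ∀ x, η x = 0 := by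
    intro x
    have h5 := hζd x
    have : ζ = fun _ => 0 := funext hζ0
    rw [this] at h5
    have := h5.unique (hasDerivAt_const x 0)
    simp only [mul_zero] at this
    linarith
  have hz0 : ∀ x, z x = 0 := by
    intro x
    have h5 := hη x
    have : η = fun _ => 0 := funext hη0'
    rw [this] at h5
    have := h5.unique (hasDerivAt_const x 0)
    simp only [mul_zero] at this
    linarith
  have hc1z : c₁ = 0 := by
    have := (hsplit 1).2.1
    have h6 := EE_pos σ 1 1
    by_contra hne
    have : 0 < c₁ ^ 2 * EE σ 1 1 ^ 2 := by positivity
    linarith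
  have hc2z : c₂ = 0 := by
    have := (hsplit 1).2.2
    have h6 := EE_pos σ 1 1
    have h7 := hs 1
    by_contra hne
    have : 0 < c₂ ^ 2 * (4 * 1 ^ 2 * EE σ 1 1 ^ 2
      + 8 * σ * (σ - 2) * (1 - tt σ 1 ^ 2) * EE σ 1 1 ^ 2) := by positivity
    linarith
  have hu0 : ∀ x, u x = 0 := by
    intro x
    have := hz0 x
    simp only [hz'] at this
    rw [hc1z, hc2z] at this
    linarith
  have hu10 : ∀ x, u1 x = 0 := by
    intro x
    have h5 := hu x
    have : u = fun _ => 0 := funext hu0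
    rw [this] at h5
    exact h5.unique (hasDerivAt_const x 0)
  intro x
  refine ⟨hu0 x, ?_⟩
  have h5 := hu1 x
  have : u1 = fun _ => 0 := funext hu10
  rw [this] at h5
  have := h5.unique (hasDerivAt_const x 0)
  rw [hu0 x] at this
  linarith

lemma comp_zero (σ : ℝ) (hσ : 2 ≤ σ) (E : ℝ) (hE : E * E = 1) (A : ℂ →L[ℝ] ℝ)
    (g h g1 h1 g2 h2 : ℝ → ℂ)
    (hg : ∀ x, HasDerivAt g (g1 x) x) (hg1 : ∀ x, HasDerivAt g1 (g2 x) x)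
    (hh : ∀ x, HasDerivAt h (h1 x) x) (hh1 : ∀ x, HasDerivAt h1 (h2 x) x)
    (eg : ∀ x, g2 x = g x - ((σ + 1) * phiPow σ x) • g x - (σ * phiPow σ x) • h x - E • g x)
    (eh : ∀ x, h2 x = h x - ((σ + 1) * phiPow σ x) • h x - (σ * phiPow σ x) • g x + E • h x)
    (B : ℝ) (bg : ∀ x, ‖g x‖ ≤ B) (bh : ∀ x, ‖h x‖ ≤ B) :
    ∀ x, A (g x) = 0 ∧ A (h x) = 0 := by
  have key : ∀ {k k1 : ℝ → ℂ}, (∀ x, HasDerivAt k (k1 x) x) →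
      ∀ x, HasDerivAt (fun y => A (k y)) (A (k1 x)) x := by
    intro k k1 hk x
    exact A.hasFDerivAt.comp_hasDerivAt x (hk x)
  have bA : ∀ z : ℂ, ‖z‖ ≤ B → |A z| ≤ ‖A‖ * B := by
    intro z hz
    exact (A.le_opNorm z).trans (mul_le_mul_of_nonneg_left hz (norm_nonneg A))
  have R := real_case σ hσ (fun x => A (g x) + A (h x)) (fun x => A (g1 x) + A (h1 x))
    (fun x => E * (A (g x) - A (h x))) (fun x => E * (A (g1 x) - A (h1 x)))
    (fun x => (key hg x).add (key hh x))
    (fun x => by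
      refine ((key hg1 x).add (key hh1 x)).congr_deriv ?_
      rw [eg, eh]
      simp only [map_add, map_sub, map_smul, smul_eq_mul, phiPow_eq]
      ring)
    (fun x => ((key hg x).sub (key hh x)).const_mul E)
    (fun x => by
      refine (((key hg1 x).sub (key hh1 x)).const_mul E).congr_deriv ?_
      rw [eg, eh]
      simp only [map_add, map_sub, map_smul, smul_eq_mul, phiPow_eq]
      linear_combination (-(A (g x) + A (h x))) * hE)
    ⟨2 * (‖A‖ * B), fun x => by
      have a := bA _ (bg x)
      have b := bA _ (bh x)
      have := abs_add_le (A (g x)) (A (h x))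
      linarith⟩
    ⟨|E| * (2 * (‖A‖ * B)), fun x => by
      have a := bA _ (bg x)
      have b := bA _ (bh x)
      have := abs_sub (A (g x)) (A (h x))
      rw [abs_mul]
      exact mul_le_mul_of_nonneg_left (by linarith) (abs_nonneg E)⟩
  intro x
  obtain ⟨r1, r2⟩ := R x
  have r3 : A (g x) - A (h x) = 0 := by
    linear_combination E * r2 - (A (g x) - A (h x)) * hE
  constructor <;> linarith

lemma two_derivs (g : ℝ → ℂ) (hg : ContDiff ℝ 2 g) :
    (∀ x, HasDerivAt g (deriv g x) x) ∧
    (∀ x, HasDerivAt (deriv g) (iteratedDeriv 2 g x) x) := by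
  have h1 : ContDiff ℝ 1 (deriv g) := by
    have : ContDiff ℝ (1 + 1) g := by
      rw [one_add_one_eq_two]
      exact hg
    exact (contDiff_succ_iff_deriv.1 this).2.2
  refine ⟨fun x => (hg.differentiable (by norm_num) x).hasDerivAt, fun x => ?_⟩
  rw [iteratedDeriv_succ, iteratedDeriv_one]
  exact (h1.differentiable (by norm_num) x).hasDerivAt

lemma main_aux (σ : ℝ) (hσ : 2 ≤ σ) (E : ℝ) (hE : E * E = 1)
    (f : ℝ → ℂ × ℂ) (hf : ContDiff ℝ 2 f) (B : ℝ) (hb : ∀ x : ℝ, ‖f x‖ ≤ B)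
    (heq : ∀ x : ℝ, linH σ f x = E • f x) : f = 0 := by
  obtain ⟨a1, a2⟩ := two_derivs (fun y => (f y).1) hf.fst
  obtain ⟨b1, b2⟩ := two_derivs (fun y => (f y).2) hf.snd
  have H := fun A : ℂ →L[ℝ] ℝ => comp_zero σ hσ E hE A _ _ _ _ _ _ a1 a2 b1 b2
    (fun x => by
      have := congrArg Prod.fst (heq x)
      simp only [linH, Prod.smul_fst, Complex.real_smul] at this
      simp only [Complex.real_smul]
      linear_combination -this)
    (fun x => by
      have := congrArg Prod.snd (heq x)
      simp only [linH, Prod.smul_snd, Complex.real_smul] at this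
      simp only [Complex.real_smul]
      linear_combination this)
    B (fun x => (norm_fst_le (f x)).trans (hb x)) (fun x => (norm_snd_le (f x)).trans (hb x))
  funext x
  have r := H Complex.reCLM x
  have i := H Complex.imCLM x
  simp only [Complex.reCLM_apply, Complex.imCLM_apply] at r i
  exact Prod.ext (Complex.ext r.1 i.1) (Complex.ext r.2 i.2)

theorem stmt_16 (σ : ℝ) (hσ : 2 ≤ σ)
    (f : ℝ → ℂ × ℂ) (hf : ContDiff ℝ 2 f) (hb : ∃ B : ℝ, ∀ x : ℝ, ‖f x‖ ≤ B)
    (heq : (∀ x : ℝ, linH σ f x = f x) ∨ (∀ x : ℝ, linH σ f x = -f x)) :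
    f = 0 := by
  obtain ⟨B, hB⟩ := hb
  rcases heq with h | h
  · exact main_aux σ hσ 1 (by norm_num) f hf B hB (fun x => by rw [h x, one_smul])
  · exact main_aux σ hσ (-1) (by norm_num) f hf B hB (fun x => by rw [h x, neg_one_smul])
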